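/- Let 𝒳 be a finite-dimensional real inner product space, A, B : 𝒳 ⇉ 𝒳 set-valued operators, γ > 0 and θ̃ > 0. Then the zero set of ℒ_{θ̃} + γC satisfies (ℒ_{θ̃} + γC)⁻¹(0) = {(u*, u*, x*) : γ⁻¹(x* − u*) ∈ A(u*) and −γ⁻¹(x* − u*) ∈ B(u*)} = {(u*, u*, u* + γa*) : a* ∈ A(u*), −a* ∈ B(u*)}. Consequently, if (u*, u*, x*) ∈ (ℒ_{θ̃} + γC)⁻¹(0), then 0 ∈ A(u*) + B(u*) and x* − u* ∈ γA(u*) (i.e., u* = J_{γA}(x*)). -/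

import Mathlib

open RealInnerProductSpace Filter Pointwise

/-- The inner product on the triple product space `𝒵 = 𝒳 × 𝒳 × 𝒳`. -/
noncomputable def inner3 {X : Type*} [NormedAddCommGroup X] [InnerProductSpace ℝ X]
    (z z' : X × X × X) : ℝ :=
  ⟪z.1, z'.1⟫ + ⟪z.2.1, z'.2.1⟫ + ⟪z.2.2, z'.2.2⟫

/-- The linear map `ℒ_θ̃(u,v,x) := ((1−θ̃)u + θ̃v − x, (θ̃−2)u + (1−θ̃)v + x, u − v)`. -/
def Lmap {X : Type*} [NormedAddCommGroup X] [InnerProductSpace ℝ X]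
    (θ : ℝ) (z : X × X × X) : X × X × X :=
  ((1 - θ) • z.1 + θ • z.2.1 - z.2.2,
    (θ - 2) • z.1 + (1 - θ) • z.2.1 + z.2.2,
    z.1 - z.2.1)

/-- The operator `(ℒ_θ̃ + γC)(u,v,x)` where `C(u,v,x) := A(u) × B(v) × {0}`. -/
def LC {X : Type*} [NormedAddCommGroup X] [InnerProductSpace ℝ X]
    (θ γ : ℝ) (A B : X → Set X) (z : X × X × X) : Set (X × X × X) :=
  {rr | ∃ a ∈ A z.1, ∃ b ∈ B z.2.1, rr = Lmap θ z + γ • ((a, b, (0 : X)) : X × X × X)}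

/-- `T : 𝒳 ⇉ 𝒳` is β-strongly monotone (β = 0 meaning just monotone). -/
def StrMono {X : Type*} [NormedAddCommGroup X] [InnerProductSpace ℝ X]
    (β : ℝ) (T : X → Set X) : Prop :=
  ∀ x x' w w' : X, w ∈ T x → w' ∈ T x' → β * ‖x - x'‖ ^ 2 ≤ ⟪w - w', x - x'⟫

/-- `T : 𝒳 ⇉ 𝒳` is maximal β-strongly monotone: it is β-strongly monotone and its graph
is not properly contained in the graph of another monotone operator. -/
def MaxStrMono {X : Type*} [NormedAddCommGroup X] [InnerProductSpace ℝ X]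
    (β : ℝ) (T : X → Set X) : Prop :=
  StrMono β T ∧ ∀ T' : X → Set X, StrMono 0 T' → (∀ x, T x ⊆ T' x) → T' = T

/-- Monotonicity of an operator on the triple product space `𝒵 = 𝒳³`. -/
def Mono3 {X : Type*} [NormedAddCommGroup X] [InnerProductSpace ℝ X]
    (T : (X × X × X) → Set (X × X × X)) : Prop :=
  ∀ z z' t t', t ∈ T z → t' ∈ T z' → 0 ≤ inner3 (z - z') (t - t')

/-- Maximal monotonicity of an operator on the triple product space `𝒵 = 𝒳³`. -/
def MaxMono3 {X : Type*} [NormedAddCommGroup X] [InnerProductSpace ℝ X]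
    (T : (X × X × X) → Set (X × X × X)) : Prop :=
  Mono3 T ∧ ∀ T', Mono3 T' → (∀ z, T z ⊆ T' z) → T' = T

/-- The ε-enlargement `T^[ε]` of an operator on `𝒳`. -/
def epsEnlX {X : Type*} [NormedAddCommGroup X] [InnerProductSpace ℝ X]
    (T : X → Set X) (ε : ℝ) (z : X) : Set X :=
  {t | ∀ z' t' : X, t' ∈ T z' → -ε ≤ ⟪t - t', z - z'⟫}

/-- The relaxed Peaceman–Rachford splitting method with relaxation parameter `θ` and
scaling `γ`: for `k ≥ 1`, `u_k = J_{γA}(x_{k−1})`, `v_k = J_{γB}(2u_k − x_{k−1})`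
(expressed through resolvent inclusions) and `x_k = x_{k−1} + θ(v_k − u_k)`. -/
structure RPR {X : Type*} [NormedAddCommGroup X] [InnerProductSpace ℝ X]
    (A B : X → Set X) (γ θ : ℝ) (x u v : ℕ → X) : Prop where
  resA : ∀ k, 1 ≤ k → x (k - 1) - u k ∈ γ • A (u k)
  resB : ∀ k, 1 ≤ k → (2 : ℝ) • u k - x (k - 1) - v k ∈ γ • B (v k)
  step : ∀ k, 1 ≤ k → x k = x (k - 1) + θ • (v k - u k)

/-!
The third component of `ℒ_θ̃ + γC` is `u - v`, so a zero lies on the diagonal `v = u`. There the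
`θ̃`-terms cancel: `ℒ_θ̃(u, u, x) = (u - x, x - u, 0)`. Hence `(u, v, x)` is a zero if and only if
`v = u`, `x - u ∈ γA(u)` and `u - x ∈ γB(u)`, and for `γ ≠ 0` the two inclusions can be divided
by `γ`.
-/

section ZeroSet

variable {X : Type*} [NormedAddCommGroup X] [InnerProductSpace ℝ X]

theorem Lmap_diag (θ : ℝ) (u x : X) : Lmap θ (u, u, x) = (u - x, x - u, 0) := by
  simp only [Lmap, Prod.mk.injEq, sub_self, and_true]
  constructor <;> module

theorem eq_of_zero_mem_LC {θ γ : ℝ} {A B : X → Set X} {u v x : X}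
    (h : (0 : X × X × X) ∈ LC θ γ A B (u, v, x)) : u = v := by
  obtain ⟨a, -, b, -, h_eq⟩ := h
  have h_third : (0 : X) = u - v + γ • (0 : X) := congrArg (fun z => z.2.2) h_eq
  rw [smul_zero, add_zero] at h_third
  exact sub_eq_zero.mp h_third.symm

theorem zero_mem_LC_diag_iff {θ γ : ℝ} {A B : X → Set X} {u x : X} :
    (0 : X × X × X) ∈ LC θ γ A B (u, u, x) ↔ x - u ∈ γ • A u ∧ u - x ∈ γ • B u := by
  have components_eq_zero_iff (a b : X) :
      0 = Lmap θ (u, u, x) + γ • ((a, b, 0) : X × X × X) ↔ γ • a = x - u ∧ γ • b = u - x := by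
    rw [Lmap_diag, eq_comm, add_eq_zero_iff_neg_eq, eq_comm]
    simp only [Prod.smul_mk, Prod.neg_mk, neg_sub, neg_zero, smul_zero, Prod.mk.injEq, and_true]
  simp only [LC, Set.mem_ofPred_eq, components_eq_zero_iff, Set.mem_smul_set]
  constructor
  · rintro ⟨a, ha, b, hb, hxa, hxb⟩
    exact ⟨⟨a, ha, hxa⟩, ⟨b, hb, hxb⟩⟩
  · rintro ⟨⟨a, ha, hxa⟩, ⟨b, hb, hxb⟩⟩
    exact ⟨a, ha, b, hb, hxa, hxb⟩

theorem zero_mem_LC_diag_iff_inv_smul_mem {θ γ : ℝ} (hγ : γ ≠ 0) {A B : X → Set X} {u x : X} :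
    (0 : X × X × X) ∈ LC θ γ A B (u, u, x) ↔
      γ⁻¹ • (x - u) ∈ A u ∧ -(γ⁻¹ • (x - u)) ∈ B u := by
  rw [zero_mem_LC_diag_iff, Set.mem_smul_set_iff_inv_smul_mem₀ hγ,
    Set.mem_smul_set_iff_inv_smul_mem₀ hγ, ← smul_neg, neg_sub]

theorem zero_mem_LC_iff_exists_inv_smul_mem {θ γ : ℝ} (hγ : γ ≠ 0) {A B : X → Set X}
    {z : X × X × X} :
    0 ∈ LC θ γ A B z ↔
      ∃ u x : X, z = (u, u, x) ∧ γ⁻¹ • (x - u) ∈ A u ∧ -(γ⁻¹ • (x - u)) ∈ B u := by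
  constructor
  · obtain ⟨u, v, x⟩ := z
    intro h
    obtain rfl : u = v := eq_of_zero_mem_LC h
    exact ⟨u, x, rfl, (zero_mem_LC_diag_iff_inv_smul_mem hγ).mp h⟩
  · rintro ⟨u, x, rfl, h⟩
    exact (zero_mem_LC_diag_iff_inv_smul_mem hγ).mpr h

theorem zero_mem_LC_iff_exists_add_smul {θ γ : ℝ} (hγ : γ ≠ 0) {A B : X → Set X}
    {z : X × X × X} :
    0 ∈ LC θ γ A B z ↔ ∃ u a : X, a ∈ A u ∧ -a ∈ B u ∧ z = (u, u, u + γ • a) := by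
  rw [zero_mem_LC_iff_exists_inv_smul_mem hγ]
  constructor
  · rintro ⟨u, x, rfl, ha, hb⟩
    refine ⟨u, γ⁻¹ • (x - u), ha, hb, ?_⟩
    rw [smul_inv_smul₀ hγ, add_sub_cancel]
  · rintro ⟨u, a, ha, hb, rfl⟩
    refine ⟨u, u + γ • a, rfl, ?_⟩
    rw [add_sub_cancel_left, inv_smul_smul₀ hγ]
    exact ⟨ha, hb⟩

end ZeroSet

theorem stmt11_general {X : Type*} [NormedAddCommGroup X] [InnerProductSpace ℝ X]
    (A B : X → Set X) (γ θ : ℝ) (hγ : γ ≠ 0) :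
    ({z : X × X × X | (0 : X × X × X) ∈ LC θ γ A B z}
        = {z : X × X × X | ∃ u xx : X, z = (u, u, xx)
            ∧ γ⁻¹ • (xx - u) ∈ A u ∧ -(γ⁻¹ • (xx - u)) ∈ B u})
    ∧ ({z : X × X × X | (0 : X × X × X) ∈ LC θ γ A B z}
        = {z : X × X × X | ∃ u a : X, a ∈ A u ∧ -a ∈ B u ∧ z = (u, u, u + γ • a)})
    ∧ ∀ u xx : X, (0 : X × X × X) ∈ LC θ γ A B (u, u, xx) →
        (∃ a ∈ A u, ∃ b ∈ B u, a + b = 0) ∧ xx - u ∈ γ • A u := by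
  refine ⟨Set.ext fun _ => zero_mem_LC_iff_exists_inv_smul_mem hγ,
    Set.ext fun _ => zero_mem_LC_iff_exists_add_smul hγ, fun _ _ h => ⟨?_, ?_⟩⟩
  · obtain ⟨ha, hb⟩ := (zero_mem_LC_diag_iff_inv_smul_mem hγ).mp h
    exact ⟨_, ha, _, hb, add_neg_cancel _⟩
  · exact (zero_mem_LC_diag_iff.mp h).1

/-- Characterization of the zero set of `ℒ_θ̃ + γC`. -/
theorem stmt11 {X : Type*} [NormedAddCommGroup X] [InnerProductSpace ℝ X]
    [FiniteDimensional ℝ X]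
    (A B : X → Set X) (γ θt : ℝ) (hγ : 0 < γ) (hθt : 0 < θt) :
    ({z : X × X × X | (0 : X × X × X) ∈ LC θt γ A B z}
        = {z : X × X × X | ∃ u xx : X, z = (u, u, xx)
            ∧ γ⁻¹ • (xx - u) ∈ A u ∧ -(γ⁻¹ • (xx - u)) ∈ B u})
    ∧ ({z : X × X × X | (0 : X × X × X) ∈ LC θt γ A B z}
        = {z : X × X × X | ∃ u a : X, a ∈ A u ∧ -a ∈ B u ∧ z = (u, u, u + γ • a)})
    ∧ ∀ u xx : X, (0 : X × X × X) ∈ LC θt γ A B (u, u, xx) →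
        (∃ a ∈ A u, ∃ b ∈ B u, a + b = 0) ∧ xx - u ∈ γ • A u :=
  stmt11_general A B γ θt hγ.ne'
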